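/- Let n ≥ 1, let Σ ∈ ℝ^{n×n} be symmetric positive definite, let μ̂, μ ∈ ℝⁿ and set γ := μ − μ̂. Let ρ be the measure on ℝⁿ with density w ↦ min(g_{0,Σ}(w), g_{−γ,Σ}(w)) with respect to Lebesgue measure, and let v be the pushforward of ρ under the map w ↦ (μ + w, μ + w), a measure on ℝⁿ × ℝⁿ. Then v is a sub-probability coupling of N(μ̂, Σ) and N(μ, Σ) over the diagonal R := {(a, b) ∈ ℝⁿ × ℝⁿ : a = b} with respect to δ := 1 − 2Φ(−½√(γᵀΣ⁻¹γ)); that is: v(ℝⁿ × ℝⁿ) = v(R) = 2Φ(−½√(γᵀΣ⁻¹γ)) = 1 − δ, v(A × ℝⁿ) ≤ N(μ̂,Σ)(A) for every measurable A ⊆ ℝⁿ, and v(ℝⁿ × A) ≤ N(μ,Σ)(A) for every measurable A ⊆ ℝⁿ. -/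

import Mathlib

open Matrix MeasureTheory Set

/-- Density of the multivariate normal distribution `N(μ, S)` (for `S` symmetric positive
definite) with respect to Lebesgue measure on `ℝⁿ`. -/
noncomputable def gaussDensity {ι : Type*} [Fintype ι] [DecidableEq ι] (μ : ι → ℝ)
    (S : Matrix ι ι ℝ) (w : ι → ℝ) : ℝ :=
  (2 * Real.pi) ^ (-(Fintype.card ι : ℝ) / 2) * S.det ^ (-(1 : ℝ) / 2) *
    Real.exp (-(1 / 2) * ((w - μ) ⬝ᵥ (S⁻¹ *ᵥ (w - μ))))

/-- The Gaussian probability measure `N(μ, S)` on `ℝⁿ`. -/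
noncomputable def gaussMeasure {ι : Type*} [Fintype ι] [DecidableEq ι] (μ : ι → ℝ)
    (S : Matrix ι ι ℝ) : Measure (ι → ℝ) :=
  volume.withDensity fun w => ENNReal.ofReal (gaussDensity μ S w)

/-- The standard normal cumulative distribution function. -/
noncomputable def stdNormalCdf (ζ : ℝ) : ℝ :=
  ∫ β in Set.Iic ζ, (2 * Real.pi) ^ (-(1 : ℝ) / 2) * Real.exp (-β ^ 2 / 2)

/-!
The pointwise minimum of two densities lies below both, so moving it onto the diagonal produces
marginals dominated by the two measures, once the translation by `μ` is undone. Its mass is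
`𝔼 [min 1 (exp ℓ)]` under `N(m₁, S)`, where `ℓ` is the log-likelihood ratio of `N(m₂, S)` to
`N(m₁, S)`. Being affine in a Gaussian vector, `ℓ` has law `N(-v/2, v)` with
`v = (m₂ - m₁)ᵀ S⁻¹ (m₂ - m₁)`. This is also the law of the log-likelihood ratio of `N(√v, 1)` to
`N(0, 1)`, so the mass is that of the minimum of these two densities on the line, which cross at
`√v / 2` and leave a tail `Φ(-√v / 2)` on either side.
-/

lemma map_withDensity_comp {α β : Type*} [MeasurableSpace α] [MeasurableSpace β] {ν : Measure α}
    {T : α → β} {f : β → ENNReal} (hT : Measurable T) (hf : Measurable f) :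
    (ν.withDensity (f ∘ T)).map T = (ν.map T).withDensity f := by
  ext s hs
  rw [Measure.map_apply hT hs, withDensity_apply _ (hT hs), withDensity_apply _ hs,
    setLIntegral_map hs hf hT]
  rfl

lemma map_prodMk_self_prod {Ω α : Type*} [MeasurableSpace Ω] [MeasurableSpace α] (ν : Measure Ω)
    {f : Ω → α} (hf : Measurable f) {s t : Set α} (hs : MeasurableSet s) (ht : MeasurableSet t) :
    (ν.map fun ω => (f ω, f ω)) (s ×ˢ t) = ν.map f (s ∩ t) := by
  rw [Measure.map_apply (hf.prodMk hf) (hs.prod ht), mk_preimage_prod, ← preimage_inter,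
    Measure.map_apply hf (hs.inter ht)]

lemma map_prodMk_self_diagonal {Ω α : Type*} [MeasurableSpace Ω] [MeasurableSpace α]
    [MeasurableEq α] (ν : Measure Ω) {f : Ω → α} (hf : Measurable f) :
    (ν.map fun ω => (f ω, f ω)) (diagonal α) = ν univ := by
  rw [Measure.map_apply (hf.prodMk hf) measurableSet_diagonal]
  congr 1
  simp [preimage, mem_diagonal_iff]

lemma pi_withDensity_ofReal {ι : Type*} [Fintype ι] {X : ι → Type*} [∀ i, MeasureSpace (X i)]
    [∀ i, SigmaFinite (volume : Measure (X i))] {f : ∀ i, X i → ℝ} (hf : ∀ i, Integrable (f i))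
    (hf₀ : ∀ i x, 0 ≤ f i x) :
    Measure.pi (fun i => volume.withDensity fun x => ENNReal.ofReal (f i x)) =
      volume.withDensity fun x => ENNReal.ofReal (∏ i, f i (x i)) := by
  have (i : ι) := isFiniteMeasure_withDensity_ofReal (hf i).2
  refine Measure.pi_eq fun s hs => ?_
  rw [withDensity_apply _ (.univ_pi hs), volume_pi, Measure.restrict_pi_pi,
    ← ofReal_integral_eq_lintegral_ofReal
      (Integrable.fintype_prod_dep fun i => (hf i).restrict)
      (.of_forall fun x => Finset.prod_nonneg fun i _ => hf₀ i (x i)),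
    integral_fintype_prod_eq_prod,
    ENNReal.ofReal_prod_of_nonneg fun i _ => integral_nonneg (hf₀ i)]
  refine Finset.prod_congr rfl fun i _ => ?_
  rw [withDensity_apply _ (hs i),
    ofReal_integral_eq_lintegral_ofReal (hf i).restrict (.of_forall (hf₀ i))]

section RealGaussian

open ProbabilityTheory
open scoped NNReal

lemma ofReal_stdNormalCdf (z : ℝ) : ENNReal.ofReal (stdNormalCdf z) = gaussianReal 0 1 (Iic z) := by
  rw [gaussianReal_apply_eq_integral 0 one_ne_zero, stdNormalCdf]
  simp [gaussianPDFReal_def, Real.sqrt_eq_rpow, ← Real.rpow_neg Real.two_pi_pos.le, neg_div]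

lemma stdNormalCdf_nonneg (z : ℝ) : 0 ≤ stdNormalCdf z :=
  integral_nonneg fun _ => by positivity

lemma gaussianReal_Iic (m z : ℝ) :
    gaussianReal m 1 (Iic z) = ENNReal.ofReal (stdNormalCdf (z - m)) := by
  rw [ofReal_stdNormalCdf, ← sub_self m, ← gaussianReal_map_sub_const,
    Measure.map_apply (by fun_prop) measurableSet_Iic]
  simp

lemma gaussianReal_Ioi (m z : ℝ) :
    gaussianReal m 1 (Ioi z) = ENNReal.ofReal (stdNormalCdf (m - z)) := by
  have := nullSingletonClass_gaussianReal (μ := 0) (v := 1) one_ne_zero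
  rw [ofReal_stdNormalCdf, ← measure_congr Iio_ae_eq_Iic, ← sub_self m,
    ← gaussianReal_map_const_sub, Measure.map_apply (by fun_prop) measurableSet_Iio]
  simp

lemma gaussianPDF_eq_gaussianPDF_mul_exp (a b x : ℝ) :
    gaussianPDF b 1 x =
      gaussianPDF a 1 x * ENNReal.ofReal (Real.exp ((b - a) * (x - (a + b) / 2))) := by
  simp only [gaussianPDF, gaussianPDFReal]
  rw [← ENNReal.ofReal_mul (by positivity), mul_assoc _ (Real.exp _), ← Real.exp_add]
  congr 3
  simp only [NNReal.coe_one]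
  ring

lemma lintegral_min_gaussianPDF {a b : ℝ} (hab : a ≤ b) :
    ∫⁻ x, min (gaussianPDF a 1 x) (gaussianPDF b 1 x) =
      ENNReal.ofReal (2 * stdNormalCdf (-(1 / 2) * (b - a))) := by
  have hleft : ∫⁻ x in Iic ((a + b) / 2), min (gaussianPDF a 1 x) (gaussianPDF b 1 x) =
      ENNReal.ofReal (stdNormalCdf (-(1 / 2) * (b - a))) := by
    have hmin : ∀ x ∈ Iic ((a + b) / 2),
        min (gaussianPDF a 1 x) (gaussianPDF b 1 x) = gaussianPDF b 1 x := fun x hx => by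
      rw [min_eq_right_iff, gaussianPDF_eq_gaussianPDF_mul_exp a b]
      refine mul_le_of_le_one_right' (ENNReal.ofReal_le_one.2 (Real.exp_le_one_iff.2 ?_))
      exact mul_nonpos_of_nonneg_of_nonpos (sub_nonneg.2 hab) (sub_nonpos.2 hx)
    rw [setLIntegral_congr_fun measurableSet_Iic hmin, ← gaussianReal_apply b one_ne_zero,
      gaussianReal_Iic]
    ring_nf
  have hright : ∫⁻ x in (Iic ((a + b) / 2))ᶜ, min (gaussianPDF a 1 x) (gaussianPDF b 1 x) =
      ENNReal.ofReal (stdNormalCdf (-(1 / 2) * (b - a))) := by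
    have hmin : ∀ x ∈ Ioi ((a + b) / 2),
        min (gaussianPDF a 1 x) (gaussianPDF b 1 x) = gaussianPDF a 1 x := fun x hx => by
      rw [min_eq_left_iff, gaussianPDF_eq_gaussianPDF_mul_exp a b]
      refine le_mul_of_one_le_right' (ENNReal.one_le_ofReal.2 (Real.one_le_exp_iff.2 ?_))
      exact mul_nonneg (sub_nonneg.2 hab) (sub_nonneg.2 (le_of_lt hx))
    rw [compl_Iic, setLIntegral_congr_fun measurableSet_Ioi hmin,
      ← gaussianReal_apply a one_ne_zero, gaussianReal_Ioi]
    ring_nf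
  rw [← lintegral_add_compl _ measurableSet_Iic, hleft, hright, two_mul,
    ENNReal.ofReal_add (stdNormalCdf_nonneg _) (stdNormalCdf_nonneg _)]

lemma lintegral_min_one_exp_gaussianReal (v : ℝ≥0) :
    ∫⁻ y, ENNReal.ofReal (min 1 (Real.exp y)) ∂gaussianReal (-(v / 2)) v =
      ENNReal.ofReal (2 * stdNormalCdf (-(1 / 2) * √v)) := by
  have hmap : (gaussianReal 0 1).map (fun x => √v * (x - √v / 2)) = gaussianReal (-(v / 2)) v := by
    change Measure.map ((√v * ·) ∘ (· - √v / 2)) _ = _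
    rw [← Measure.map_map (by fun_prop) (by fun_prop), gaussianReal_map_sub_const,
      gaussianReal_map_const_mul]
    congr 1
    · linear_combination -(1 / 2 : ℝ) * Real.mul_self_sqrt v.coe_nonneg
    · ext
      simp
  have hmin (x : ℝ) : gaussianPDF 0 1 x * ENNReal.ofReal (min 1 (Real.exp (√v * (x - √v / 2)))) =
      min (gaussianPDF 0 1 x) (gaussianPDF √v 1 x) := by
    rw [ENNReal.ofReal_min, mul_min, ENNReal.ofReal_one, mul_one,
      gaussianPDF_eq_gaussianPDF_mul_exp 0 √v, sub_zero, zero_add]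
  rw [← hmap, lintegral_map (by fun_prop) (by fun_prop),
    gaussianReal_of_var_ne_zero 0 one_ne_zero,
    lintegral_withDensity_eq_lintegral_mul _ (measurable_gaussianPDF 0 1) (by fun_prop)]
  simp only [Pi.mul_apply, hmin, lintegral_min_gaussianPDF (Real.sqrt_nonneg v), sub_zero]

end RealGaussian

section MultivariateGaussian

open ProbabilityTheory
open scoped MatrixOrder NNReal

variable {ι : Type*} [Fintype ι] [DecidableEq ι] {S : Matrix ι ι ℝ}

lemma measurable_gaussDensity (m : ι → ℝ) (S : Matrix ι ι ℝ) : Measurable (gaussDensity m S) := by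
  unfold gaussDensity
  exact (by fun_prop : Continuous _).measurable

lemma gaussDensity_nonneg (hS : 0 ≤ S.det) (m w : ι → ℝ) : 0 ≤ gaussDensity m S w := by
  unfold gaussDensity
  positivity

lemma gaussDensity_const_add (c m : ι → ℝ) (S : Matrix ι ι ℝ) (w : ι → ℝ) :
    gaussDensity (c + m) S (c + w) = gaussDensity m S w := by
  simp only [gaussDensity, add_sub_add_left_eq_sub]

lemma gaussMeasure_map_const_add (c m : ι → ℝ) (S : Matrix ι ι ℝ) :
    (gaussMeasure m S).map (c + ·) = gaussMeasure (c + m) S := by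
  have h := map_withDensity_comp (ν := volume) (measurable_const_add c)
    (measurable_gaussDensity (c + m) S).ennreal_ofReal
  simpa only [gaussMeasure, Function.comp_def, gaussDensity_const_add, map_add_left_eq_self] using h

lemma gaussDensity_mulVec {M : Matrix ι ι ℝ} (hM : M.det ≠ 0) (hS : 0 ≤ S.det) (m w : ι → ℝ) :
    gaussDensity (M *ᵥ m) (M * S * Mᵀ) (M *ᵥ w) = |M.det|⁻¹ * gaussDensity m S w := by
  have hdet : (M * S * Mᵀ).det ^ (-(1 : ℝ) / 2) = |M.det|⁻¹ * S.det ^ (-(1 : ℝ) / 2) := by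
    rw [det_mul, det_mul, det_transpose, mul_right_comm, Real.mul_rpow (mul_self_nonneg _) hS,
      ← abs_mul_abs_self M.det, neg_div, Real.rpow_neg (by positivity), ← Real.sqrt_eq_rpow,
      Real.sqrt_mul_self (abs_nonneg _)]
  have hquad (z : ι → ℝ) : (M *ᵥ z) ⬝ᵥ ((M * S * Mᵀ)⁻¹ *ᵥ (M *ᵥ z)) = z ⬝ᵥ (S⁻¹ *ᵥ z) := by
    have hinv : Mᵀ * (M * S * Mᵀ)⁻¹ * M = S⁻¹ := by
      rw [Matrix.mul_inv_rev, Matrix.mul_inv_rev, mul_nonsing_inv_cancel_left,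
        nonsing_inv_mul_cancel_right]
      all_goals simpa using hM
    rw [dotProduct_comm, ← dotProduct_transpose_mulVec, mulVec_mulVec, mulVec_mulVec, hinv]
  simp only [gaussDensity, ← mulVec_sub, hquad, hdet]
  ring

lemma gaussMeasure_map_mulVec {M : Matrix ι ι ℝ} (hM : M.det ≠ 0) (hS : 0 ≤ S.det) (m : ι → ℝ) :
    (gaussMeasure m S).map (M *ᵥ ·) = gaussMeasure (M *ᵥ m) (M * S * Mᵀ) := by
  have hmeas := (measurable_gaussDensity (M *ᵥ m) (M * S * Mᵀ)).ennreal_ofReal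
  have hdensity : gaussMeasure m S = ENNReal.ofReal |M.det| • volume.withDensity
      ((fun w => ENNReal.ofReal (gaussDensity (M *ᵥ m) (M * S * Mᵀ) w)) ∘ (toLin' M)) := by
    rw [← withDensity_smul _ (hmeas.comp (by fun_prop)), gaussMeasure]
    congr 1 with w
    simp [gaussDensity_mulVec hM hS, ← ENNReal.ofReal_mul, hM]
  change (gaussMeasure m S).map (toLin' M) = _
  rw [hdensity, Measure.map_smul, map_withDensity_comp (by fun_prop) hmeas,
    Real.map_matrix_volume_pi_eq_smul_volume_pi hM, withDensity_smul_measure, smul_smul,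
    ← ENNReal.ofReal_mul (abs_nonneg _), ← abs_mul, mul_inv_cancel₀ hM, abs_one,
    ENNReal.ofReal_one, one_smul, gaussMeasure]

lemma gaussDensity_zero_one (w : ι → ℝ) :
    gaussDensity 0 1 w = ∏ i, gaussianPDFReal 0 1 (w i) := by
  have hconst : (2 * Real.pi) ^ (-(Fintype.card ι : ℝ) / 2) =
      (√(2 * Real.pi))⁻¹ ^ Fintype.card ι := by
    rw [Real.sqrt_eq_rpow, ← Real.rpow_neg (by positivity), ← Real.rpow_mul_natCast (by positivity)]
    ring_nf
  simp only [gaussDensity, gaussianPDFReal, Finset.prod_mul_distrib, ← Real.exp_sum,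
    Finset.prod_const, Finset.card_univ, det_one, Real.one_rpow, mul_one, NNReal.coe_one, hconst,
    dotProduct, Finset.mul_sum, inv_one, one_mulVec, sub_zero]
  ring_nf

lemma gaussMeasure_zero_one :
    gaussMeasure (0 : ι → ℝ) 1 = Measure.pi fun _ => gaussianReal 0 1 := by
  simp only [gaussianReal_of_var_ne_zero 0 one_ne_zero, gaussianPDF_def,
    pi_withDensity_ofReal (fun _ : ι => integrable_gaussianPDFReal 0 1)
      fun _ => gaussianPDFReal_nonneg 0 1, ← gaussDensity_zero_one, gaussMeasure]

lemma gaussMeasure_map_toLp (hS : S.PosDef) (m : ι → ℝ) :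
    (gaussMeasure m S).map (WithLp.toLp 2) = multivariateGaussian (WithLp.toLp 2 m) S := by
  set M := CFC.sqrt S
  have hMM : M * M = S := CFC.sqrt_mul_sqrt_self S hS.posSemidef.nonneg
  have hsymm : Mᵀ = M := by
    rw [← conjTranspose_eq_transpose_of_trivial]
    exact (CFC.sqrt_nonneg S).isSelfAdjoint.star_eq
  have hdet : M.det ≠ 0 := fun h => hS.det_pos.ne' (by rw [← hMM, det_mul, h, zero_mul])
  have haffine : gaussMeasure m S =
      (Measure.pi fun _ => gaussianReal 0 1).map ((m + ·) ∘ (M *ᵥ ·)) := by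
    rw [← Measure.map_map (by fun_prop) (by fun_prop : Continuous _).measurable,
      ← gaussMeasure_zero_one, gaussMeasure_map_mulVec hdet (by simp), gaussMeasure_map_const_add,
      mulVec_zero, add_zero, Matrix.mul_one, hsymm, hMM]
  rw [haffine, multivariateGaussian, ← map_pi_eq_stdGaussian,
    Measure.map_map (by fun_prop) (by fun_prop), Measure.map_map (by fun_prop) (by fun_prop)]
  rfl

lemma gaussMeasure_map_dotProduct (hS : S.PosDef) (m a : ι → ℝ) :
    (gaussMeasure m S).map (a ⬝ᵥ ·) = gaussianReal (a ⬝ᵥ m) (a ⬝ᵥ (S *ᵥ a)).toNNReal := by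
  let L : StrongDual ℝ (EuclideanSpace ℝ ι) := innerSL ℝ (WithLp.toLp 2 a)
  have hL : (a ⬝ᵥ ·) = L ∘ WithLp.toLp 2 := by
    ext z
    simp [L, PiLp.inner_apply, dotProduct, mul_comm]
  have hmean : (multivariateGaussian (WithLp.toLp 2 m) S)[L] = a ⬝ᵥ m := by
    rw [L.integral_comp_id_comm IsGaussian.integrable_id, integral_id_multivariateGaussian]
    exact congr_fun hL.symm m
  have hvar : Var[L; multivariateGaussian (WithLp.toLp 2 m) S] = a ⬝ᵥ (S *ᵥ a) := by
    rw [← covarianceBilin_multivariateGaussian hS.posSemidef (WithLp.toLp 2 a) (WithLp.toLp 2 a),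
      covarianceBilin_self IsGaussian.memLp_two_id]
    rfl
  rw [hL, ← Measure.map_map (by fun_prop) (by fun_prop), gaussMeasure_map_toLp hS,
    IsGaussian.map_eq_gaussianReal, hmean, hvar]

/-- The log-likelihood ratio `log (g_{m₂,S}(w) / g_{m₁,S}(w))` of two Gaussians with common
covariance, written as the affine function of `w` that it is for symmetric `S`: it vanishes at the
midpoint of the means. -/
noncomputable def gaussLogRatio (m₁ m₂ : ι → ℝ) (S : Matrix ι ι ℝ) (w : ι → ℝ) : ℝ :=
  (S⁻¹ *ᵥ (m₂ - m₁)) ⬝ᵥ (w - (1 / 2 : ℝ) • (m₁ + m₂))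

lemma measurable_gaussLogRatio (m₁ m₂ : ι → ℝ) (S : Matrix ι ι ℝ) :
    Measurable (gaussLogRatio m₁ m₂ S) := by
  unfold gaussLogRatio
  exact (by fun_prop : Continuous _).measurable

lemma gaussDensity_eq_gaussDensity_mul_exp (hS : S.IsSymm) (m₁ m₂ w : ι → ℝ) :
    gaussDensity m₂ S w = gaussDensity m₁ S w * Real.exp (gaussLogRatio m₁ m₂ S w) := by
  have hsymm (x y : ι → ℝ) : (S⁻¹ *ᵥ x) ⬝ᵥ y = x ⬝ᵥ (S⁻¹ *ᵥ y) := by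
    rw [dotProduct_comm, ← dotProduct_transpose_mulVec, transpose_nonsing_inv, hS.eq]
  have hmid : w - (1 / 2 : ℝ) • (m₁ + m₂) = (1 / 2 : ℝ) • ((w - m₁) + (w - m₂)) := by
    module
  rw [gaussDensity, gaussDensity, gaussLogRatio, mul_assoc _ (Real.exp _), ← Real.exp_add, hmid,
    ← sub_sub_sub_cancel_left m₁ m₂ w]
  generalize w - m₁ = x, w - m₂ = y
  congr 2
  simp only [mulVec_sub, sub_dotProduct, dotProduct_smul, dotProduct_add, smul_eq_mul, hsymm]
  rw [← hsymm y x, dotProduct_comm (S⁻¹ *ᵥ y) x]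
  ring

lemma gaussMeasure_map_gaussLogRatio (hS : S.PosDef) (m₁ m₂ : ι → ℝ) {v : ℝ≥0}
    (hv : (v : ℝ) = (m₂ - m₁) ⬝ᵥ (S⁻¹ *ᵥ (m₂ - m₁))) :
    (gaussMeasure m₁ S).map (gaussLogRatio m₁ m₂ S) = gaussianReal (-(v / 2)) v := by
  set a := S⁻¹ *ᵥ (m₂ - m₁)
  have hvar : a ⬝ᵥ (S *ᵥ a) = v := by
    rw [mulVec_mulVec, mul_nonsing_inv _ hS.det_pos.ne'.isUnit, one_mulVec, dotProduct_comm, hv]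
  have hmean : a ⬝ᵥ m₁ - a ⬝ᵥ ((1 / 2 : ℝ) • (m₁ + m₂)) = -(v / 2) := by
    rw [hv, dotProduct_comm (m₂ - m₁), ← dotProduct_sub,
      show m₁ - (1 / 2 : ℝ) • (m₁ + m₂) = (-(1 / 2) : ℝ) • (m₂ - m₁) by module, dotProduct_smul,
      smul_eq_mul]
    ring
  have hfun : gaussLogRatio m₁ m₂ S = (· - a ⬝ᵥ ((1 / 2 : ℝ) • (m₁ + m₂))) ∘ (a ⬝ᵥ ·) :=
    funext fun w => dotProduct_sub ..
  rw [hfun, ← Measure.map_map (by fun_prop) (by fun_prop : Continuous _).measurable,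
    gaussMeasure_map_dotProduct hS, gaussianReal_map_sub_const, hmean, hvar, Real.toNNReal_coe]

/-- The common part of `N(m₁, S)` and `N(m₂, S)`: the measure whose density is the pointwise minimum
of the two Gaussian densities, i.e. the mass shared by their maximal coupling. -/
noncomputable def gaussOverlap (m₁ m₂ : ι → ℝ) (S : Matrix ι ι ℝ) : Measure (ι → ℝ) :=
  volume.withDensity fun w => ENNReal.ofReal (min (gaussDensity m₁ S w) (gaussDensity m₂ S w))

lemma gaussOverlap_le_left (m₁ m₂ : ι → ℝ) (S : Matrix ι ι ℝ) :
    gaussOverlap m₁ m₂ S ≤ gaussMeasure m₁ S :=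
  withDensity_mono (.of_forall fun _ => ENNReal.ofReal_le_ofReal (min_le_left _ _))

lemma gaussOverlap_le_right (m₁ m₂ : ι → ℝ) (S : Matrix ι ι ℝ) :
    gaussOverlap m₁ m₂ S ≤ gaussMeasure m₂ S :=
  withDensity_mono (.of_forall fun _ => ENNReal.ofReal_le_ofReal (min_le_right _ _))

lemma gaussOverlap_univ (hS : S.PosDef) (m₁ m₂ : ι → ℝ) :
    gaussOverlap m₁ m₂ S univ = ENNReal.ofReal
      (2 * stdNormalCdf (-(1 / 2) * √((m₂ - m₁) ⬝ᵥ (S⁻¹ *ᵥ (m₂ - m₁))))) := by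
  have hmin (w : ι → ℝ) : ENNReal.ofReal (min (gaussDensity m₁ S w) (gaussDensity m₂ S w)) =
      ENNReal.ofReal (gaussDensity m₁ S w) *
        ENNReal.ofReal (min 1 (Real.exp (gaussLogRatio m₁ m₂ S w))) := by
    have hnonneg := gaussDensity_nonneg hS.det_pos.le m₁ w
    rw [← ENNReal.ofReal_mul hnonneg, mul_min_of_nonneg _ _ hnonneg, mul_one,
      gaussDensity_eq_gaussDensity_mul_exp (isHermitian_iff_isSymm.1 hS.isHermitian) m₁ m₂]
  obtain ⟨v, hv⟩ : ∃ v : ℝ≥0, (v : ℝ) = (m₂ - m₁) ⬝ᵥ (S⁻¹ *ᵥ (m₂ - m₁)) :=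
    ⟨⟨_, hS.inv.posSemidef.dotProduct_mulVec_nonneg (m₂ - m₁)⟩, rfl⟩
  calc gaussOverlap m₁ m₂ S univ
      = ∫⁻ w, ENNReal.ofReal (min 1 (Real.exp (gaussLogRatio m₁ m₂ S w))) ∂gaussMeasure m₁ S := by
        have := measurable_gaussLogRatio m₁ m₂ S
        rw [gaussOverlap, withDensity_apply _ .univ, Measure.restrict_univ, gaussMeasure,
          lintegral_withDensity_eq_lintegral_mul _
            (measurable_gaussDensity m₁ S).ennreal_ofReal (by fun_prop)]
        exact lintegral_congr hmin
    _ = ∫⁻ y, ENNReal.ofReal (min 1 (Real.exp y))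
          ∂(gaussMeasure m₁ S).map (gaussLogRatio m₁ m₂ S) :=
        (lintegral_map (f := fun y => ENNReal.ofReal (min 1 (Real.exp y))) (by fun_prop)
          (measurable_gaussLogRatio m₁ m₂ S)).symm
    _ = _ := by
        rw [gaussMeasure_map_gaussLogRatio hS m₁ m₂ hv, lintegral_min_one_exp_gaussianReal, hv]

theorem gauss_subprob_coupling_general {ι : Type*} [Fintype ι] [DecidableEq ι]
    (S : Matrix ι ι ℝ) (hS : S.PosDef) (μhat μ : ι → ℝ) :
    let γ : ι → ℝ := μ - μhat
    let ρ : Measure (ι → ℝ) :=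
      volume.withDensity fun w =>
        ENNReal.ofReal (min (gaussDensity 0 S w) (gaussDensity (-γ) S w))
    let v : Measure ((ι → ℝ) × (ι → ℝ)) := ρ.map fun w => (μ + w, μ + w)
    let R : Set ((ι → ℝ) × (ι → ℝ)) := {q | q.1 = q.2}
    v univ = v R ∧
    v R = ENNReal.ofReal (2 * stdNormalCdf (-(1 / 2) * Real.sqrt (γ ⬝ᵥ (S⁻¹ *ᵥ γ)))) ∧
    (∀ A : Set (ι → ℝ), MeasurableSet A →
      v (A ×ˢ (univ : Set (ι → ℝ))) ≤ gaussMeasure μhat S A) ∧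
    (∀ A : Set (ι → ℝ), MeasurableSet A →
      v ((univ : Set (ι → ℝ)) ×ˢ A) ≤ gaussMeasure μ S A) := by
  intro γ ρ v R
  have hv : v univ = ρ univ := by
    rw [Measure.map_apply (by fun_prop) .univ, preimage_univ]
  have hR : v R = ρ univ := map_prodMk_self_diagonal ρ (measurable_const_add μ)
  refine ⟨hv.trans hR.symm, ?_, fun A hA => ?_, fun A hA => ?_⟩
  · have hmass : ρ univ = _ := gaussOverlap_univ hS 0 (-γ)
    rw [hR, hmass, sub_zero, mulVec_neg, neg_dotProduct_neg]
  · have hmap : (gaussMeasure (-γ) S).map (μ + ·) = gaussMeasure μhat S := by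
      simp [gaussMeasure_map_const_add, γ]
    rw [map_prodMk_self_prod ρ (measurable_const_add μ) hA .univ, inter_univ, ← hmap]
    exact Measure.map_mono (gaussOverlap_le_right 0 (-γ) S) (measurable_const_add μ) A
  · have hmap : (gaussMeasure 0 S).map (μ + ·) = gaussMeasure μ S := by
      simp [gaussMeasure_map_const_add]
    rw [map_prodMk_self_prod ρ (measurable_const_add μ) .univ hA, univ_inter, ← hmap]
    exact Measure.map_mono (gaussOverlap_le_left 0 (-γ) S) (measurable_const_add μ) A

end MultivariateGaussian

/-- **The sub-probability coupling of two Gaussians over the diagonal (Theorem 5).**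
With `γ := μ − μ̂`, the pushforward `v` of the measure with density
`min(g_{0,S}, g_{−γ,S})` under `w ↦ (μ + w, μ + w)` is a sub-probability coupling of
`N(μ̂, S)` and `N(μ, S)` over the diagonal with respect to
`δ := 1 − 2 Φ(−½ √(γᵀ S⁻¹ γ))`. -/
theorem gauss_subprob_coupling {n : ℕ} (hn : 1 ≤ n)
    (S : Matrix (Fin n) (Fin n) ℝ) (hS : S.PosDef)
    (μhat μ : Fin n → ℝ) :
    let γ : Fin n → ℝ := μ - μhat
    let ρ : Measure (Fin n → ℝ) :=
      volume.withDensity fun w =>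
        ENNReal.ofReal (min (gaussDensity 0 S w) (gaussDensity (-γ) S w))
    let v : Measure ((Fin n → ℝ) × (Fin n → ℝ)) := ρ.map fun w => (μ + w, μ + w)
    let R : Set ((Fin n → ℝ) × (Fin n → ℝ)) := {q | q.1 = q.2}
    v univ = v R ∧
    v R = ENNReal.ofReal (2 * stdNormalCdf (-(1 / 2) * Real.sqrt (γ ⬝ᵥ (S⁻¹ *ᵥ γ)))) ∧
    (∀ A : Set (Fin n → ℝ), MeasurableSet A →
      v (A ×ˢ (univ : Set (Fin n → ℝ))) ≤ gaussMeasure μhat S A) ∧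
    (∀ A : Set (Fin n → ℝ), MeasurableSet A →
      v ((univ : Set (Fin n → ℝ)) ×ˢ A) ≤ gaussMeasure μ S A) := by
  exact gauss_subprob_coupling_general S hS μhat μ
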